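/- arXiv:1305.4444 — 4 statements merged into one kernel-verified Lean document; each statement's English description precedes it below -/
import Mathlib

section
/- For every i ∈ {1,…,V} one has d(C^⊥) − 1 ≤ r_i(C) ≤ V − d(C) + 1, and moreover max{r_i(C) : i = 1,…,V} = V − d(C) + 1. -/
open Matrix

/-- The dual code of a linear code `C ⊆ 𝔽_q^V`:
`C^⊥ = {x ∈ 𝔽_q^V : x·c = 0 for all c ∈ C}`. -/
def dualCode {F : Type*} [Field F] {V : ℕ} (C : Submodule F (Fin V → F)) :
    Submodule F (Fin V → F) where
  carrier := {x | ∀ c ∈ C, x ⬝ᵥ c = 0}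
  add_mem' := fun ha hb c hc => by
    simp only [Set.mem_setOf_eq] at *
    simp [add_dotProduct, ha c hc, hb c hc]
  zero_mem' := fun c _ => by simp
  smul_mem' := fun a x hx => by
    intro c hc
    simp only [Set.mem_setOf_eq] at hx
    simp [smul_dotProduct, hx c hc]


theorem aux_mem_code {F : Type*} [Field F] {V k : ℕ}
    (C : Submodule F (Fin V → F)) (G : Matrix (Fin k) (Fin V) F)
    (hGspan : Submodule.span F (Set.range fun i : Fin k => G i) = C) (c : Fin V → F) :
    c ∈ C ↔ ∃ y : Fin k → F, ∀ j, c j = ∑ s, y s * G s j := by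
  rw [← hGspan, Submodule.mem_span_range_iff_exists_fun]
  constructor
  · rintro ⟨y, rfl⟩
    exact ⟨y, fun j => by simp [Finset.sum_apply]⟩
  · rintro ⟨y, hy⟩
    exact ⟨y, by ext j; simp [Finset.sum_apply, hy]⟩

theorem aux_zero {F : Type*} [Field F] {V k : ℕ}
    (C : Submodule F (Fin V → F)) (G : Matrix (Fin k) (Fin V) F)
    (hGspan : Submodule.span F (Set.range fun i : Fin k => G i) = C)
    (B : Finset (Fin V)) (i : Fin V)
    (h : (fun s => G s i) ∈
          Submodule.span F ((fun j => fun s => G s j) '' (B : Set (Fin V)))) :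
    ∃ a : Fin V → F, (∀ j ∉ B, a j = 0) ∧ ∀ c ∈ C, c i = ∑ j, a j * c j := by
  classical
  rw [Submodule.mem_span_image_finset_iff_exists_fun'] at h
  obtain ⟨a, ha⟩ := h
  refine ⟨fun j => if j ∈ B then a j else 0, fun j hj => by simp [hj], fun c hc => ?_⟩
  obtain ⟨y, hy⟩ := (aux_mem_code C G hGspan c).1 hc
  have h2 : ∀ s, G s i = ∑ j ∈ B, a j * G s j := fun s => by
    have := congrFun ha s
    simpa [Finset.sum_apply] using this.symm
  simp only [ite_mul, zero_mul, Finset.sum_ite_mem, Finset.univ_inter]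
  simp only [hy, h2, Finset.mul_sum]
  rw [Finset.sum_comm]
  refine Finset.sum_congr rfl fun j _ => Finset.sum_congr rfl fun s _ => by ring

theorem aux_exists {F : Type*} [Field F] {V k : ℕ}
    (C : Submodule F (Fin V → F)) (G : Matrix (Fin k) (Fin V) F)
    (hGspan : Submodule.span F (Set.range fun i : Fin k => G i) = C)
    (B : Finset (Fin V)) (i : Fin V)
    (h : (fun s => G s i) ∉
          Submodule.span F ((fun j => fun s => G s j) '' (B : Set (Fin V)))) :
    ∃ c ∈ C, c i ≠ 0 ∧ ∀ j ∈ B, c j = 0 := by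
  obtain ⟨f, hf, hle⟩ := Submodule.exists_le_ker_of_notMem h
  have key : ∀ v : Fin k → F, f v = ∑ s, f (Pi.single s 1) * v s := fun v => by
    conv_lhs => rw [← Finset.univ_sum_single v]
    rw [map_sum]
    refine Finset.sum_congr rfl fun s _ => ?_
    rw [mul_comm, ← smul_eq_mul, ← map_smul]
    congr 1
    ext t
    simp [Pi.single_apply]
  refine ⟨fun j => f (fun s => G s j), ?_, hf, fun j hj => ?_⟩
  · rw [aux_mem_code C G hGspan]
    exact ⟨fun s => f (Pi.single s 1), fun j => key _⟩
  · exact hle (Submodule.subset_span ⟨j, hj, rfl⟩)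

theorem aux_wt {F : Type*} [Field F] [DecidableEq F] {V : ℕ} (c : Fin V → F) (B : Finset (Fin V))
    (h : ∀ j ∈ B, c j = 0) : hammingNorm c + B.card ≤ V := by
  have : Disjoint (Finset.univ.filter fun j => c j ≠ 0) B := by
    rw [Finset.disjoint_left]
    intro j hj hB
    exact (Finset.mem_filter.1 hj).2 (h j hB)
  have h2 := Finset.card_le_univ ((Finset.univ.filter fun j => c j ≠ 0) ∪ B)
  rw [Finset.card_union_of_disjoint this, Fintype.card_fin] at h2
  exact h2

/-- With `r_i(C)` the smallest `ρ` such that every subset of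
`{1,…,V}\{i}` of cardinality `ρ` is a substitution set for `i`, one has
`d(C^⊥) − 1 ≤ r_i(C) ≤ V − d(C) + 1` for every `i`, and
`max{r_i(C) : i} = V − d(C) + 1`. -/
theorem stmt_11 {F : Type*} [Field F] [Fintype F] [DecidableEq F] {V k : ℕ}
    (hV : 0 < V)
    (C : Submodule F (Fin V → F)) (hCk : Module.finrank F C = k)
    (G : Matrix (Fin k) (Fin V) F)
    (hGspan : Submodule.span F (Set.range fun i : Fin k => G i) = C)
    (hGli : LinearIndependent F (fun i : Fin k => G i))
    (dC : ℕ)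
    (hdC : IsLeast {w | ∃ c ∈ C, c ≠ 0 ∧ hammingNorm c = w} dC)
    (hdC2 : 2 ≤ dC)
    (d' : ℕ)
    (hd' : IsLeast {w | ∃ c ∈ dualCode C, c ≠ 0 ∧ hammingNorm c = w} d')
    (hd'2 : 2 ≤ d')
    (r : Fin V → ℕ)
    (hr : ∀ i : Fin V,
      IsLeast {ρ : ℕ | ∀ B : Finset (Fin V), i ∉ B → B.card = ρ →
        (fun s => G s i) ∈
          Submodule.span F ((fun j => fun s => G s j) '' (B : Set (Fin V)))} (r i)) :
    (∀ i : Fin V, d' - 1 ≤ r i ∧ r i ≤ V - dC + 1) ∧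
      IsGreatest (Set.range r) (V - dC + 1) := by
  have upper : ∀ i, r i ≤ V - dC + 1 := by
    intro i
    apply (hr i).2
    intro B hiB hB
    by_contra hn
    obtain ⟨c, hc, hci, hc0⟩ := aux_exists C G hGspan B i hn
    have h1 := hdC.2 ⟨c, hc, fun h => hci (by simp [h]), rfl⟩
    have h2 := aux_wt c B hc0
    omega
  refine ⟨fun i => ⟨?_, upper i⟩, ?_, ?_⟩
  · by_contra hlt
    obtain ⟨x, hx, hx0, hxd⟩ := hd'.1
    have hdV := aux_wt x ∅ (by simp)
    simp only [Finset.card_empty] at hdV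
    obtain ⟨B, hBs, hB⟩ := Finset.exists_subset_card_eq
      (s := Finset.univ.erase i) (n := r i) (by simp; omega)
    have hiB : i ∉ B := fun h => by simpa using hBs h
    obtain ⟨a, ha, hac⟩ := aux_zero C G hGspan B i ((hr i).1 B hiB hB)
    have hz0 : a - Pi.single i 1 ≠ 0 := fun h => by
      have := congrFun h i
      simp [ha i hiB] at this
    have hz : a - Pi.single i 1 ∈ dualCode C := by
      intro c hc
      rw [sub_dotProduct, single_dotProduct, hac c hc]
      simp [dotProduct]
    have h1 := hd'.2 ⟨_, hz, hz0, rfl⟩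
    have h2 := aux_wt (a - Pi.single i 1) (insert i B)ᶜ (by
      intro j hj
      simp only [Finset.mem_compl, Finset.mem_insert, not_or] at hj
      simp [ha j hj.2, hj.1])
    rw [Finset.card_compl, Finset.card_insert_of_notMem hiB, Fintype.card_fin] at h2
    omega
  · obtain ⟨c, hc, hc0, hcd⟩ := hdC.1
    obtain ⟨i, hi⟩ := Function.ne_iff.1 hc0
    refine ⟨i, le_antisymm (upper i) ?_⟩
    by_contra hlt
    have hZ : (Finset.univ.filter fun j => c j = 0).card + dC = V := by
      have := Finset.card_filter_add_card_filter_not (s := Finset.univ) (fun j => c j = 0)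
      rw [Finset.card_univ, Fintype.card_fin] at this
      rw [← hcd]
      exact this
    obtain ⟨B, hBs, hB⟩ := Finset.exists_subset_card_eq
      (s := Finset.univ.filter fun j => c j = 0) (n := r i) (by omega)
    have hB0 : ∀ j ∈ B, c j = 0 := fun j hj => (Finset.mem_filter.1 (hBs hj)).2
    obtain ⟨a, ha, hac⟩ := aux_zero C G hGspan B i ((hr i).1 B (fun h => hi (hB0 i h)) hB)
    apply hi
    rw [hac c hc]
    refine Finset.sum_eq_zero fun j _ => ?_
    by_cases hj : j ∈ B
    · simp [hB0 j hj]
    · simp [ha j hj]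
  · rintro _ ⟨i, rfl⟩
    exact upper i
end

section
/- min{t_i(C) : i = 1,…,V} = d(C^⊥) − 2. -/
open Matrix

theorem mem_dual_iff {F : Type*} [Field F] {V k : ℕ} (C : Submodule F (Fin V → F))
    (G : Matrix (Fin k) (Fin V) F)
    (hGspan : Submodule.span F (Set.range fun i : Fin k => G i) = C) (x : Fin V → F) :
    x ∈ dualCode C ↔ ∀ s, ∑ j, x j * G s j = 0 := by
  constructor
  · intro h s
    exact h (G s) (hGspan ▸ Submodule.subset_span ⟨s, rfl⟩)
  · intro h c hc
    rw [← hGspan] at hc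
    induction hc using Submodule.span_induction with
    | mem y hy => obtain ⟨s, rfl⟩ := hy; exact h s
    | zero => simp
    | add y z _ _ hy hz => rw [dotProduct_add, hy, hz, add_zero]
    | smul a y _ hy => rw [dotProduct_smul, hy, smul_zero]

/-- With `t_i(C)` the largest `τ` (with `τ ≤ V − 1`, so that such
subsets exist) such that every subset of `{1,…,V}\{i}` of cardinality `τ` is an
adversary set for `i`: `min{t_i(C) : i = 1,…,V} = d(C^⊥) − 2`. -/
theorem stmt_14 {F : Type*} [Field F] [Fintype F] [DecidableEq F] {V k : ℕ}
    (hV : 0 < V)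
    (C : Submodule F (Fin V → F)) (hCk : Module.finrank F C = k)
    (hdC : ∀ c ∈ C, c ≠ 0 → 2 ≤ hammingNorm c)
    (G : Matrix (Fin k) (Fin V) F)
    (hGspan : Submodule.span F (Set.range fun i : Fin k => G i) = C)
    (hGli : LinearIndependent F (fun i : Fin k => G i))
    (d' : ℕ)
    (hd' : IsLeast {w | ∃ c ∈ dualCode C, c ≠ 0 ∧ hammingNorm c = w} d')
    (hd'2 : 2 ≤ d')
    (t : Fin V → ℕ)
    (ht : ∀ i : Fin V,
      IsGreatest {τ : ℕ | τ ≤ V - 1 ∧ ∀ A : Finset (Fin V), i ∉ A → A.card = τ →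
        (fun s => G s i) ∉
          Submodule.span F ((fun j => fun s => G s j) '' (A : Set (Fin V)))} (t i)) :
    IsLeast (Set.range t) (d' - 2) := by
  obtain ⟨⟨c, hc, hc0, hcw⟩, hmin⟩ := hd'
  have hdV : d' ≤ V := by
    rw [← hcw]; simpa using hammingNorm_le_card_fintype (x := c)
  have low : ∀ i, d' - 2 ≤ t i := by
    intro i
    apply (ht i).2
    refine ⟨by omega, ?_⟩
    intro A hiA hA hmem
    rw [Submodule.mem_span_image_finset_iff_exists_fun'] at hmem
    obtain ⟨a, ha⟩ := hmem
    let x : Fin V → F := fun j => if j = i then 1 else if j ∈ A then - a j else 0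
    have hxi : x i = 1 := by simp [x]
    have hx : x ∈ dualCode C := by
      rw [mem_dual_iff C G hGspan]
      intro s
      have h1 := congrFun ha s
      simp only [Finset.sum_apply, Pi.smul_apply, smul_eq_mul] at h1
      rw [← Finset.add_sum_erase _ _ (Finset.mem_univ i), hxi, one_mul, ← h1,
        ← Finset.sum_subset (s₁ := A) (s₂ := Finset.univ.erase i), ← Finset.sum_add_distrib]
      · apply Finset.sum_eq_zero
        intro j hj
        have : j ≠ i := fun h => hiA (h ▸ hj)
        simp [x, this, hj]
      · intro j hj
        have : j ≠ i := fun h => hiA (h ▸ hj)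
        simp [this]
      · intro j hj hjA
        have : j ≠ i := by simpa using hj
        simp [x, this, hjA]
    have hx0 : x ≠ 0 := fun h => by simp [h] at hxi
    have h2 := hmin ⟨x, hx, hx0, rfl⟩
    have h3 : hammingNorm x ≤ (insert i A).card := by
      apply Finset.card_le_card
      intro j hj
      by_contra hn
      simp only [Finset.mem_insert, not_or] at hn
      simp [x, hn.1, hn.2] at hj
    rw [Finset.card_insert_of_notMem hiA] at h3
    omega
  refine ⟨?_, by rintro _ ⟨i, rfl⟩; exact low i⟩
  obtain ⟨i, hi⟩ : ∃ i, c i ≠ 0 := by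
    by_contra! h
    exact hc0 (funext h)
  refine ⟨i, le_antisymm ?_ (low i)⟩
  by_contra hlt
  obtain ⟨hle, hadv⟩ := (ht i).1
  let S : Finset (Fin V) := (Finset.univ.filter fun j => c j ≠ 0).erase i
  have hS : S.card = d' - 1 := by
    rw [← hcw]
    exact Finset.card_erase_of_mem (by simpa using hi)
  obtain ⟨A, hSA, hAi, hAc⟩ := Finset.exists_subsuperset_card_eq
    (s := S) (t := Finset.univ.erase i) (n := t i)
    (Finset.erase_subset_erase _ (Finset.filter_subset _ _)) (by omega) (by simpa using hle)
  refine hadv A (fun h => by simpa using hAi h) hAc ?_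
  rw [Submodule.mem_span_image_finset_iff_exists_fun']
  refine ⟨fun j => - (c i)⁻¹ * c j, ?_⟩
  funext s
  have h1 := (mem_dual_iff C G hGspan c).1 hc s
  rw [← Finset.add_sum_erase _ _ (Finset.mem_univ i), ← Finset.sum_subset hAi] at h1
  · simp only [Finset.sum_apply, Pi.smul_apply, smul_eq_mul, mul_assoc]
    rw [← Finset.mul_sum]
    rw [add_comm] at h1
    rw [eq_neg_of_add_eq_zero_left h1]
    field_simp
  · intro j hj hjA
    have hcj : c j = 0 := by
      by_contra hn
      apply hjA
      apply hSA
      simp only [S, Finset.mem_erase, Finset.mem_filter, Finset.mem_univ, true_and]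
      exact ⟨by simpa using hj, hn⟩
    simp [hcj]
end

section
/- If C is a maximum distance separable (MDS) code, i.e., d(C) = V − k + 1, then for every i ∈ {1,…,V} a subset A ⊆ {1,…,V}\{i} is an adversary set for i if and only if |A| ≤ d(C^⊥) − 2; that is, the adversary sets for i are exactly the subsets of cardinality at most d(C^⊥) − 2. -/
open Matrix

theorem aux_dual {F : Type*} [Field F] {V k : ℕ}
    (C : Submodule F (Fin V → F)) (G : Matrix (Fin k) (Fin V) F)
    (hGspan : Submodule.span F (Set.range fun i : Fin k => G i) = C) (x : Fin V → F) :
    x ∈ dualCode C ↔ ∑ j, x j • (fun s => G s j) = (0 : Fin k → F) := by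
  subst hGspan
  constructor
  · intro h
    funext s
    have h1 := h (G s) (Submodule.subset_span ⟨s, rfl⟩)
    simpa [dotProduct, Finset.sum_apply] using h1
  · intro h c hc
    induction hc using Submodule.span_induction with
    | mem c hc =>
      obtain ⟨s, rfl⟩ := hc
      have := congrFun h s
      simpa [dotProduct, Finset.sum_apply] using this
    | zero => simp
    | add a b _ _ ha hb => simp [dotProduct_add, ha, hb]
    | smul a b _ hb => simp [dotProduct_smul, hb]

theorem aux_span {F : Type*} [Field F] [DecidableEq F] {V k : ℕ}
    (C : Submodule F (Fin V → F)) (G : Matrix (Fin k) (Fin V) F)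
    (hGspan : Submodule.span F (Set.range fun i : Fin k => G i) = C)
    (hGli : LinearIndependent F (fun i : Fin k => G i))
    (hmin : ∀ c ∈ C, c ≠ 0 → V - k + 1 ≤ hammingNorm c)
    (A : Finset (Fin V)) (hA : k ≤ A.card) :
    Submodule.span F ((fun j => fun s => G s j) '' (A : Set (Fin V))) = ⊤ := by
  by_contra hne
  obtain ⟨f, hf0, hf⟩ := Submodule.exists_le_ker_of_lt_top _ (lt_top_iff_ne_top.2 hne)
  set y : Fin k → F := fun s => f (Pi.single s 1) with hy
  have hfy : ∀ v, f v = ∑ s, v s * y s := by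
    intro v
    rw [LinearMap.pi_apply_eq_sum_univ f v]
    apply Finset.sum_congr rfl
    intro s _
    rw [smul_eq_mul, hy]
    congr 2
    funext t
    simp [Pi.single_apply, eq_comm]
  set c : Fin V → F := ∑ s, y s • G s with hc
  have hcj : ∀ j, c j = f (fun s => G s j) := by
    intro j
    rw [hfy, hc]
    simp [Finset.sum_apply, mul_comm]
  have hcC : c ∈ C := by
    rw [← hGspan]
    exact Submodule.sum_mem _ fun s _ =>
      Submodule.smul_mem _ _ (Submodule.subset_span ⟨s, rfl⟩)
  have hc0 : c ≠ 0 := by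
    intro h0
    have := Fintype.linearIndependent_iff.1 hGli y h0
    apply hf0
    ext v
    simp [hy] at this ⊢
    exact this _
  have h1 := hmin c hcC hc0
  have h2 : hammingNorm c ≤ (Aᶜ).card := by
    unfold hammingNorm
    apply Finset.card_le_card
    intro j hj
    rw [Finset.mem_compl]
    intro hjA
    apply (Finset.mem_filter.1 hj).2
    rw [hcj]
    exact hf (Submodule.subset_span ⟨j, hjA, rfl⟩)
  rw [Finset.card_compl, Fintype.card_fin] at h2
  omega

/-- If `C` is MDS, i.e. `d(C) = V − k + 1`, then for every `i` a
subset `A ⊆ {1,…,V}\{i}` is an adversary set for `i` (i.e. `g_i` is not in the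
`𝔽_q`-span of `{g_j : j ∈ A}`) iff `|A| ≤ d(C^⊥) − 2`. -/
theorem stmt_15 {F : Type*} [Field F] [Fintype F] [DecidableEq F] {V k : ℕ}
    (C : Submodule F (Fin V → F)) (hCk : Module.finrank F C = k)
    (G : Matrix (Fin k) (Fin V) F)
    (hGspan : Submodule.span F (Set.range fun i : Fin k => G i) = C)
    (hGli : LinearIndependent F (fun i : Fin k => G i))
    (dC : ℕ)
    (hdC : IsLeast {w | ∃ c ∈ C, c ≠ 0 ∧ hammingNorm c = w} dC)
    (hdC2 : 2 ≤ dC)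
    (d' : ℕ)
    (hd' : IsLeast {w | ∃ c ∈ dualCode C, c ≠ 0 ∧ hammingNorm c = w} d')
    (hd'2 : 2 ≤ d')
    (hMDS : dC = V - k + 1) :
    ∀ i : Fin V, ∀ A : Finset (Fin V), i ∉ A →
      ((fun s => G s i) ∉
          Submodule.span F ((fun j => fun s => G s j) '' (A : Set (Fin V))) ↔
        A.card ≤ d' - 2) := by
  subst hMDS
  have hmin : ∀ c ∈ C, c ≠ 0 → V - k + 1 ≤ hammingNorm c :=
    fun c hc h0 => hdC.2 ⟨c, hc, h0, rfl⟩
  have hkV : k ≤ V := by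
    have := Submodule.finrank_le C
    simpa [hCk] using this
  intro i A hi
  constructor
  · intro hadv
    by_contra hcard
    have hk : A.card < k := by
      by_contra hk
      apply hadv
      rw [aux_span C G hGspan hGli hmin A (by omega)]
      trivial
    obtain ⟨x, hx, hx0, hxw⟩ := hd'.1
    have hSc : (Finset.univ.filter fun j => x j ≠ 0).card = d' := hxw
    obtain ⟨T, hST, hT⟩ := Finset.exists_superset_card_eq
      (s := Finset.univ.filter fun j => x j ≠ 0) (n := k) (by omega) (by simpa using hkV)
    have hspan := aux_span C G hGspan hGli hmin T hT.ge
    have hli : LinearIndependent F (fun j : T => (fun s => G s j.1 : Fin k → F)) := by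
      apply linearIndependent_of_top_le_span_of_card_eq_finrank
      · rw [← hspan]
        apply Submodule.span_mono
        rintro _ ⟨j, hj, rfl⟩
        exact ⟨⟨j, hj⟩, rfl⟩
      · simp [hT]
    apply hx0
    have hsum := (aux_dual C G hGspan x).1 hx
    have hsum2 : ∑ j : T, x j.1 • (fun s => G s j.1 : Fin k → F) = 0 := by
      rw [Finset.sum_coe_sort T (fun j => x j • (fun s => G s j : Fin k → F)), ← hsum]
      apply Finset.sum_subset (Finset.subset_univ _)
      intro j _ hj
      have : x j = 0 := by
        by_contra h
        exact hj (hST (by simp [h]))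
      simp [this]
    have hz := Fintype.linearIndependent_iff.1 hli (fun j => x j.1) hsum2
    funext j
    by_contra h
    exact h (hz ⟨j, hST (by simpa using h)⟩)
  · intro hcard hmem
    obtain ⟨a, ha⟩ := (Submodule.mem_span_image_finset_iff_exists_fun F).1 hmem
    set x : Fin V → F := fun j => if j = i then -1 else if h : j ∈ A then a ⟨j, h⟩ else 0 with hx
    have hxd : x ∈ dualCode C := by
      rw [aux_dual C G hGspan, ← Finset.add_sum_erase _ _ (Finset.mem_univ i)]
      have : ∑ j ∈ Finset.univ.erase i, x j • (fun s => G s j : Fin k → F)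
          = fun s => G s i := by
        rw [← ha]
        symm
        trans ∑ j ∈ A, x j • (fun s => G s j : Fin k → F)
        · rw [← Finset.sum_coe_sort A (fun j => x j • (fun s => G s j : Fin k → F))]
          apply Finset.sum_congr rfl
          rintro ⟨j, hj⟩ -
          have : j ≠ i := fun h => hi (h ▸ hj)
          simp [hx, this, hj]
        · apply Finset.sum_subset
          · intro j hj
            have : j ≠ i := fun h => hi (h ▸ hj)
            simp [this]
          · intro j hj hjA
            simp [hx, Finset.ne_of_mem_erase hj, hjA]
      rw [this]
      simp [hx]
    have hx0 : x ≠ 0 := by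
      intro h
      have := congrFun h i
      simp [hx] at this
    have h1 : d' ≤ hammingNorm x := hd'.2 ⟨x, hxd, hx0, rfl⟩
    have h2 : hammingNorm x ≤ (insert i A).card := by
      unfold hammingNorm
      apply Finset.card_le_card
      intro j hj
      have hj := (Finset.mem_filter.1 hj).2
      by_contra h
      simp only [Finset.mem_insert, not_or] at h
      exact hj (by simp [hx, h.1, h.2])
    rw [Finset.card_insert_of_notMem hi] at h2
    omega
end

section
/- For any i ∈ {1,…,V}, a subset B ⊆ {1,…,V}\{i} is a minimal substitution set for i if and only if there exists a codeword c ∈ C^⊥ that is minimal with respect to i and whose support equals B ∪ {i}. -/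
open Matrix

/-- A codeword `c` of a code `D ⊆ 𝔽_q^V` is minimal with respect to coordinate `i`
if `c ∈ D`, `c_i = 1`, and there is no other codeword of `D` whose `i`-th component
is `1` with support strictly contained in that of `c`. -/
def IsMinimalWrt {F : Type*} [Field F] {V : ℕ} (D : Submodule F (Fin V → F))
    (i : Fin V) (c : Fin V → F) : Prop :=
  c ∈ D ∧ c i = 1 ∧
    ¬ ∃ c' ∈ D, c' ≠ c ∧ c' i = 1 ∧ Function.support c' ⊂ Function.support c

theorem mem_dualCode_iff_cols {F : Type*} [Field F] {V k : ℕ}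
    (C : Submodule F (Fin V → F)) (G : Matrix (Fin k) (Fin V) F)
    (hGspan : Submodule.span F (Set.range fun i : Fin k => G i) = C) (c : Fin V → F) :
    c ∈ dualCode C ↔ ∑ j, c j • (fun s => G s j) = 0 := by
  have h1 : c ∈ dualCode C ↔ ∀ s, c ⬝ᵥ G s = 0 := by
    constructor
    · intro h s
      exact h _ (hGspan ▸ Submodule.subset_span ⟨s, rfl⟩)
    · intro h x hx
      rw [← hGspan] at hx
      induction hx using Submodule.span_induction with
      | mem x hx => obtain ⟨s, rfl⟩ := hx; exact h s
      | zero => simp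
      | add x y _ _ hx hy => rw [dotProduct_add, hx, hy, add_zero]
      | smul a x _ hx => rw [dotProduct_smul, hx, smul_zero]
  rw [h1, funext_iff]
  simp [dotProduct, Finset.sum_apply]

theorem subst_iff {F : Type*} [Field F] {V k : ℕ}
    (C : Submodule F (Fin V → F)) (G : Matrix (Fin k) (Fin V) F)
    (hGspan : Submodule.span F (Set.range fun i : Fin k => G i) = C)
    (i : Fin V) (B : Set (Fin V)) (hiB : i ∉ B) :
    (fun s => G s i) ∈ Submodule.span F ((fun j => fun s => G s j) '' B) ↔
      ∃ c ∈ dualCode C, c i = 1 ∧ Function.support c ⊆ B ∪ {i} := by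
  constructor
  · intro h
    rw [Finsupp.mem_span_image_iff_linearCombination] at h
    obtain ⟨l, hl, hs⟩ := h
    rw [Finsupp.mem_supported'] at hl
    refine ⟨fun j => Pi.single (M := fun _ => F) i 1 j - l j, ?_, ?_, ?_⟩
    · rw [mem_dualCode_iff_cols C G hGspan]
      simp only [sub_smul, Finset.sum_sub_distrib]
      rw [Finsupp.linearCombination_apply, Finsupp.sum_fintype _ _ (by simp)] at hs
      rw [hs]
      simp [Pi.single_apply]
    · simp [hl i hiB]
    · intro j hj
      by_contra hn
      simp only [Set.mem_union, Set.mem_singleton_iff, not_or] at hn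
      apply hj
      simp [hl j hn.1, hn.2]
  · rintro ⟨c, hc, hi, hsup⟩
    rw [mem_dualCode_iff_cols C G hGspan, ← Finset.add_sum_erase _ _ (Finset.mem_univ i), hi,
      one_smul] at hc
    rw [eq_neg_of_add_eq_zero_left hc]
    refine Submodule.neg_mem _ (Submodule.sum_mem _ fun j hj => ?_)
    by_cases h0 : c j = 0
    · simp [h0]
    · have hjB : j ∈ B := by
        rcases hsup h0 with h | h
        · exact h
        · exact absurd h (Finset.ne_of_mem_erase hj)
      exact Submodule.smul_mem _ _ (Submodule.subset_span ⟨j, hjB, rfl⟩)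

/-- For any `i`, a subset `B ⊆ {1,…,V}\{i}` is a minimal substitution
set for `i` (a substitution set none of whose proper subsets is a substitution set,
where `B` is a substitution set iff `g_i` lies in the `𝔽_q`-span of
`{g_j : j ∈ B}`) iff there exists a codeword `c ∈ C^⊥` minimal with respect to `i`
whose support equals `B ∪ {i}`. -/
theorem stmt_16 {F : Type*} [Field F] [Fintype F] [DecidableEq F] {V k : ℕ}
    (C : Submodule F (Fin V → F)) (hCk : Module.finrank F C = k)
    (hdC : ∀ c ∈ C, c ≠ 0 → 2 ≤ hammingNorm c)
    (hdD : ∀ c ∈ dualCode C, c ≠ 0 → 2 ≤ hammingNorm c)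
    (G : Matrix (Fin k) (Fin V) F)
    (hGspan : Submodule.span F (Set.range fun i : Fin k => G i) = C)
    (hGli : LinearIndependent F (fun i : Fin k => G i))
    (i : Fin V) (B : Set (Fin V)) (hiB : i ∉ B) :
    ((fun s => G s i) ∈ Submodule.span F ((fun j => fun s => G s j) '' B) ∧
        ∀ B' ⊂ B, (fun s => G s i) ∉
          Submodule.span F ((fun j => fun s => G s j) '' B')) ↔
      ∃ c, IsMinimalWrt (dualCode C) i c ∧ Function.support c = B ∪ {i} := by
  constructor
  · rintro ⟨h, hmin⟩
    obtain ⟨c, hc, hi, hsup⟩ := (subst_iff C G hGspan i B hiB).1 h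
    have key : ∀ c' ∈ dualCode C, c' i = 1 → Function.support c' ⊆ B ∪ {i} →
        Function.support c' = B ∪ {i} := by
      intro c' hc' hi' hsup'
      have hsub : Function.support c' \ {i} ⊆ B := by
        rintro j ⟨hj, hji⟩
        exact (hsup' hj).resolve_right hji
      have hmem : i ∈ Function.support c' := by simp [hi']
      have heq : Function.support c' \ {i} = B := by
        by_contra hne
        refine hmin _ (hsub.ssubset_of_ne hne)
          ((subst_iff C G hGspan i _ (by simp)).2 ⟨c', hc', hi', ?_⟩)
        simp
      rw [← heq, Set.diff_union_of_subset (by simpa using hmem)]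
    have hcs := key c hc hi hsup
    refine ⟨c, ⟨hc, hi, ?_⟩, hcs⟩
    rintro ⟨c', hc', _, hi', hss⟩
    rw [hcs] at hss
    exact hss.ne (key c' hc' hi' hss.subset)
  · rintro ⟨c, ⟨hc, hi, hmin⟩, hsup⟩
    refine ⟨(subst_iff C G hGspan i B hiB).2 ⟨c, hc, hi, hsup.subset⟩, ?_⟩
    intro B' hB' h
    obtain ⟨c', hc', hi', hs'⟩ :=
      (subst_iff C G hGspan i B' (fun hx => hiB (hB'.subset hx))).1 h
    have hss : Function.support c' ⊂ Function.support c := by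
      rw [hsup]
      obtain ⟨j, hjB, hjB'⟩ := Set.exists_of_ssubset hB'
      refine (Set.ssubset_iff_of_subset
        (hs'.trans (Set.union_subset_union_left _ hB'.subset))).2 ⟨j, Or.inl hjB, ?_⟩
      intro hj
      rcases hs' hj with h | h
      · exact hjB' h
      · exact hiB (h ▸ hjB)
    exact hmin ⟨c', hc', fun h => hss.ne (by rw [h]), hi', hss⟩
end
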